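/- Let n be a positive integer and let S = {S_k ≤ Sym({1,…,m_k})}_{k=1,…,n} be a finite sequence of finite perfect transitive permutation groups such that for every k ∈ {1,…,n} there exist two generators a_k, b_k of S_k satisfying: (i) each of a_k and b_k fixes at least one point of {1,…,m_k}; (ii) the orders of a_1 and b_j are coprime and the orders of b_1 and a_j are coprime for every j ∈ {2,…,n}. Then the iterated exponentiation S̃_n is generated by 2 elements. -/

import Mathlib

open Equiv

/-- The product-action permutation of `β → α` induced by `a : β → Perm α` and `b : Perm β`. -/
def prodPerm {α β : Type} (a : β → Perm α) (b : Perm β) : Perm (β → α) where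
  toFun x := fun i => a i (x (b⁻¹ i))
  invFun x := fun i => (a (b i))⁻¹ (x (b i))
  left_inv x := by funext i; simp
  right_inv x := by funext i; simp

@[simp] theorem prodPerm_apply {α β : Type} (a : β → Perm α) (b : Perm β) (x : β → α) (i : β) :
    prodPerm a b x i = a i (x (b⁻¹ i)) := rfl

theorem prodPerm_one {α β : Type} :
    prodPerm (fun _ : β => (1 : Perm α)) 1 = 1 := by
  apply Equiv.ext; intro x; funext i; simp

theorem prodPerm_mul {α β : Type} (a a' : β → Perm α) (b b' : Perm β) :
    prodPerm a b * prodPerm a' b' = prodPerm (fun i => a i * a' (b⁻¹ i)) (b * b') := by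
  apply Equiv.ext; intro x; funext i
  simp [Perm.mul_apply, mul_inv_rev]

theorem prodPerm_inv {α β : Type} (a : β → Perm α) (b : Perm β) :
    (prodPerm a b)⁻¹ = prodPerm (fun i => (a (b i))⁻¹) b⁻¹ := by
  apply Equiv.ext; intro x; funext i
  simp [prodPerm, Perm.inv_def]

/-- The exponentiation `A ⟨≀⟩ B` of permutation groups, as a subgroup of `Perm (β → α)`
acting by the product action. -/
def expWr {α β : Type} (A : Subgroup (Perm α)) (B : Subgroup (Perm β)) :
    Subgroup (Perm (β → α)) where
  carrier := {π | ∃ (a : β → Perm α) (b : Perm β),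
    (∀ i, a i ∈ A) ∧ b ∈ B ∧ π = prodPerm a b}
  one_mem' := ⟨fun _ => 1, 1, fun _ => A.one_mem, B.one_mem, prodPerm_one.symm⟩
  mul_mem' := by
    rintro π π' ⟨a, b, ha, hb, rfl⟩ ⟨a', b', ha', hb', rfl⟩
    exact ⟨fun i => a i * a' (b⁻¹ i), b * b',
      fun i => A.mul_mem (ha i) (ha' _), B.mul_mem hb hb', prodPerm_mul a a' b b'⟩
  inv_mem' := by
    rintro π ⟨a, b, ha, hb, rfl⟩
    exact ⟨fun i => (a (b i))⁻¹, b⁻¹,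
      fun i => A.inv_mem (ha _), B.inv_mem hb, prodPerm_inv a b⟩

/-- A bundled permutation group: a set together with a subgroup of its permutation group. -/
structure PermGroup where
  carrier : Type
  grp : Subgroup (Perm carrier)

/-- Exponentiation of bundled permutation groups. -/
def ExpP (A B : PermGroup) : PermGroup :=
  ⟨B.carrier → A.carrier, expWr A.grp B.grp⟩

/-- Iterated exponentiation of a sequence of permutation groups:
`S̃ 0 = S 0` and `S̃ (k+1) = S (k+1) ⟨≀⟩ S̃ k`. -/
def iterExpP (S : ℕ → PermGroup) : ℕ → PermGroup
  | 0 => S 0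
  | k + 1 => ExpP (S (k + 1)) (iterExpP S k)

/-- `π'` in `A ⟨≀⟩ P` projects to `π` in `P`. -/
def IsLift {A P : PermGroup} (π' : (ExpP A P).grp) (π : P.grp) : Prop :=
  ∃ a : P.carrier → Perm A.carrier, (∀ i, a i ∈ A.grp) ∧
    (π' : Perm (ExpP A P).carrier) = prodPerm a (π : Perm P.carrier)

theorem IsLift.one {A P : PermGroup} : IsLift (A := A) (P := P) 1 1 :=
  ⟨fun _ => 1, fun _ => A.grp.one_mem, by
    simp only [OneMemClass.coe_one]
    exact prodPerm_one.symm⟩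

theorem IsLift.mul {A P : PermGroup} {π₁ π₂ : (ExpP A P).grp} {ρ₁ ρ₂ : P.grp}
    (h₁ : IsLift π₁ ρ₁) (h₂ : IsLift π₂ ρ₂) : IsLift (π₁ * π₂) (ρ₁ * ρ₂) := by
  obtain ⟨a, ha, hEq⟩ := h₁
  obtain ⟨a', ha', hEq'⟩ := h₂
  exact ⟨fun i => a i * a' ((ρ₁ : Perm P.carrier)⁻¹ i),
    fun i => A.grp.mul_mem (ha i) (ha' _), by
      push_cast [hEq, hEq']
      exact prodPerm_mul a a' _ _⟩

theorem IsLift.inv {A P : PermGroup} {π₁ : (ExpP A P).grp} {ρ₁ : P.grp}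
    (h₁ : IsLift π₁ ρ₁) : IsLift π₁⁻¹ ρ₁⁻¹ := by
  obtain ⟨a, ha, hEq⟩ := h₁
  exact ⟨fun i => (a ((ρ₁ : Perm P.carrier) i))⁻¹,
    fun i => A.grp.inv_mem (ha _), by
      push_cast [hEq]
      exact prodPerm_inv a _⟩

/-- The inverse limit of the iterated exponentiations, realised as the subgroup of
compatible sequences in the product of all the finite levels. -/
def iterLimit (S : ℕ → PermGroup) : Subgroup (∀ k, (iterExpP S k).grp) where
  carrier := {f | ∀ k, IsLift (A := S (k + 1)) (P := iterExpP S k) (f (k + 1)) (f k)}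
  one_mem' := fun _ => IsLift.one
  mul_mem' := fun hf hg k => IsLift.mul (hf k) (hg k)
  inv_mem' := fun hf k => IsLift.inv (hf k)

/-- Each finite level carries the discrete topology; the limit then carries the subspace
topology of the product topology, i.e. the usual profinite topology. -/
instance (S : ℕ → PermGroup) (k : ℕ) : TopologicalSpace ((iterExpP S k).grp) := ⊥

/-- The minimal number of generators of a group. -/
noncomputable def minGens (G : Type*) [Group G] : ℕ :=
  sInf {r | ∃ T : Finset G, T.card = r ∧ Subgroup.closure (T : Set G) = ⊤}

/-!
By induction it suffices to lift generators `α`, `β` of a transitive group, each fixing a point, to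
generators of the exponentiation by `⟨a, b⟩`. The lift of `α` is labelled `a` at one point of each
cycle other than that of the chosen fixed point `x₀`, and similarly for `β` and `b`. Let `H` be the
group generated by the two lifts, and consider the values at a coordinate of the elements of `H` in
the base group. Deleting one edge from every cycle does not disconnect it, so by transitivity all
coordinates have the same group of values. It contains `a ^ (orderOf α / l)` for every cycle length
`l` away from `x₀`, hence `a`, and likewise `b`. Since the lift of `α` has trivial label at `x₀`,
commutators with its powers separate every other coordinate from `x₀`, and by transitivity any two
coordinates from each other. Commutators of elements vanishing on different sets of coordinates
vanish on the union, so perfectness puts the whole base group into `H`.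
-/

open MulAction
open scoped commutatorElement

/-! ### Groups and periods -/

section Group

variable {G : Type*} [Group G] {H K : Subgroup G}

theorem commutator_closure_le_of_forall_mem {s : Set G}
    (hnorm : Subgroup.closure s ≤ Subgroup.normalizer K)
    (h : ∀ g ∈ s, ∀ x ∈ H, ⁅x, g⁆ ∈ K) : ⁅H, Subgroup.closure s⁆ ≤ K := by
  refine Subgroup.commutator_le.2 fun x hx t ht => ?_
  induction ht using Subgroup.closure_induction with
  | mem g hg => exact h g hg x hx
  | one => simp
  | mul g g' hg _ ih ih' =>
    rw [commutatorElement_mul_right_eq_mul_conj]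
    have := (Subgroup.mem_normalizer_iff.1 (hnorm hg) _).1 ih'
    simpa [mul_assoc] using K.mul_mem ih this
  | inv g hg ih =>
    rw [commutatorElement_inv_right, ← commutatorElement_inv]
    exact (Subgroup.mem_normalizer_iff''.1 (hnorm hg) _).1 (K.inv_mem ih)

theorem pow_mem_iff_period_dvd {a : G} {k : ℕ} :
    a ^ k ∈ K ↔ period a ((1 : G) : G ⧸ K) ∣ k := by
  rw [← pow_smul_eq_iff_period_dvd, MulAction.Quotient.smul_coe, eq_comm, QuotientGroup.eq]
  simp

-- The exponents `orderOf g / period g x` are coprime, as `orderOf g` is the lcm of the periods.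
theorem mem_of_pow_orderOf_div_period_mem {Γ X : Type*} [Monoid Γ] [MulAction Γ X]
    [FaithfulSMul Γ X] [Nontrivial X] {g : Γ} (hg : IsOfFinOrder g) {x₀ : X} (hx₀ : g • x₀ = x₀)
    {a : G} (h : ∀ x, x ≠ x₀ → a ^ (orderOf g / period g x) ∈ K) : a ∈ K := by
  set d := period a ((1 : G) : G ⧸ K)
  have hdvd : ∀ x, x ≠ x₀ → period g x * d ∣ orderOf g := fun x hx =>
    Nat.mul_dvd_of_dvd_div (period_dvd_orderOf g x) (pow_mem_iff_period_dvd.1 (h x hx))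
  obtain ⟨x₁, hx₁⟩ := exists_ne x₀
  obtain ⟨q, hq⟩ : d ∣ orderOf g := (dvd_mul_left _ _).trans (hdvd x₁ hx₁)
  have hpos : 0 < d * q := hq ▸ hg.orderOf_pos
  have hgq : g ^ q = 1 := eq_of_smul_eq_smul fun x : X => by
    rw [one_smul, pow_smul_eq_iff_period_dvd]
    rcases eq_or_ne x x₀ with rfl | hx
    · simp [period_eq_one_iff.2 hx₀]
    · refine Nat.dvd_of_mul_dvd_mul_right (Nat.pos_of_mul_pos_right hpos) ?_
      rw [mul_comm q, ← hq]
      exact hdvd x hx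
  have hd : d * q ∣ 1 * q := by simpa [← hq] using orderOf_dvd_of_pow_eq_one hgq
  rw [← pow_one a, pow_mem_iff_period_dvd]
  exact Nat.dvd_of_mul_dvd_mul_right (Nat.pos_of_mul_pos_left hpos) hd

end Group

theorem sum_range_mul_of_periodic {N : Type*} [AddCommMonoid N] {f : ℕ → N} {l : ℕ}
    (hf : Function.Periodic f l) (q : ℕ) :
    ∑ j ∈ Finset.range (l * q), f j = q • ∑ j ∈ Finset.range l, f j := by
  induction q with
  | zero => simp
  | succ q ih =>
    rw [Nat.mul_succ, Finset.sum_range_add, ih, succ_nsmul]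
    congr 1
    refine Finset.sum_congr rfl fun j _ => ?_
    rw [add_comm, mul_comm]
    exact hf.nat_mul q j

theorem apply_eq_of_mem_closure {X Y : Type*} {s : Set (Perm X)} {φ : X → Y}
    (h : ∀ g ∈ s, ∀ x, φ (g x) = φ x) {σ : Perm X} (hσ : σ ∈ Subgroup.closure s) (x : X) :
    φ (σ x) = φ x := by
  induction hσ using Subgroup.closure_induction generalizing x with
  | mem g hg => exact h g hg x
  | one => rfl
  | mul σ τ _ _ ihσ ihτ => rw [Perm.mul_apply, ihσ, ihτ]
  | inv σ _ ih => rw [← ih, Perm.coe_inv, apply_symm_apply]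

/-! ### The base group of an exponentiation -/

section Base

variable {M X : Type}

/-- The embedding of the base group `(Perm M)^X` of the exponentiation in `Perm (X → M)`. -/
def baseHom (M X : Type) : (X → Perm M) →* Perm (X → M) where
  toFun f := prodPerm f 1
  map_one' := prodPerm_one
  map_mul' f g := by simp [prodPerm_mul, Pi.mul_def]

@[simp]
theorem baseHom_apply (f : X → Perm M) : baseHom M X f = prodPerm f 1 := rfl

theorem prodPerm_conj_base (F f : X → Perm M) (σ : Perm X) :
    prodPerm F σ * prodPerm f 1 * (prodPerm F σ)⁻¹ =
      prodPerm (fun i => F i * f (σ⁻¹ i) * (F i)⁻¹) 1 := by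
  simp [prodPerm_inv, prodPerm_mul]

theorem commutatorElement_prodPerm_base (f G : X → Perm M) (τ : Perm X) :
    ⁅prodPerm f 1, prodPerm G τ⁆ =
      prodPerm (fun i => f i * G i * (f (τ⁻¹ i))⁻¹ * (G i)⁻¹) 1 := by
  simp [commutatorElement_def, prodPerm_inv, prodPerm_mul]

/-- The values at `x` of the elements of `H` that lie in the base group and are trivial at all
coordinates in `T`. -/
def baseValues (H : Subgroup (Perm (X → M))) (T : Set X) (x : X) : Subgroup (Perm M) :=
  (H.comap (baseHom M X) ⊓ Subgroup.pi T fun _ => ⊥).map (Pi.evalMonoidHom _ x)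

variable {H : Subgroup (Perm (X → M))} {T T' : Set X} {x : X} {σ : Perm X} {F : X → Perm M}
  {s : Perm M}

theorem mem_baseValues :
    s ∈ baseValues H T x ↔ ∃ f, prodPerm f 1 ∈ H ∧ (∀ y ∈ T, f y = 1) ∧ f x = s := by
  simp [baseValues, Subgroup.mem_pi, and_assoc]

theorem conj_mem_baseValues_image (hF : prodPerm F σ ∈ H) (hs : s ∈ baseValues H T x) :
    F (σ x) * s * (F (σ x))⁻¹ ∈ baseValues H (σ '' T) (σ x) := by
  obtain ⟨f, hf, hfT, rfl⟩ := mem_baseValues.1 hs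
  have hconj := H.mul_mem (H.mul_mem hF hf) (H.inv_mem hF)
  rw [prodPerm_conj_base] at hconj
  refine mem_baseValues.2 ⟨_, hconj, ?_, by simp⟩
  rintro _ ⟨y, hy, rfl⟩
  simp [hfT y hy]

theorem le_normalizer_baseValues : baseValues H ∅ x ≤ Subgroup.normalizer (baseValues H T x) := by
  have hconj : ∀ w ∈ baseValues H ∅ x, ∀ s ∈ baseValues H T x, w * s * w⁻¹ ∈ baseValues H T x := by
    intro w hw s hs
    obtain ⟨f, hf, -, rfl⟩ := mem_baseValues.1 hw
    simpa using conj_mem_baseValues_image hf hs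
  refine fun w hw => Subgroup.mem_normalizer_iff.2 fun s => ⟨hconj w hw s, fun hs => ?_⟩
  simpa [mul_assoc] using hconj w⁻¹ (inv_mem hw) _ hs

theorem baseValues_le_baseValues_image (hF : prodPerm F σ ∈ H)
    (hw : F (σ x) ∈ baseValues H ∅ (σ x)) :
    baseValues H T x ≤ baseValues H (σ '' T) (σ x) := fun s hs =>
  (Subgroup.mem_normalizer_iff.1 (le_normalizer_baseValues hw) s).2
    (conj_mem_baseValues_image hF hs)

theorem baseValues_empty_apply_eq (hF : prodPerm F σ ∈ H) (hx : F (σ x) = 1) :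
    baseValues H ∅ (σ x) = baseValues H ∅ x := by
  apply le_antisymm
  · have hinv := H.inv_mem hF
    rw [prodPerm_inv] at hinv
    simpa using baseValues_le_baseValues_image (T := ∅) (x := σ x) hinv (by simp [hx])
  · simpa using baseValues_le_baseValues_image (T := ∅) hF (by simp [hx])

theorem commutatorElement_mem_baseValues (hF : prodPerm F σ ∈ H) (hx : σ x = x)
    (hT : ∀ y ∈ T, σ y = y ∧ F y = 1) (hs : s ∈ baseValues H ∅ x) :
    ⁅s, F x⁆ ∈ baseValues H T x := by
  obtain ⟨f, hf, -, rfl⟩ := mem_baseValues.1 hs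
  have hfix : ∀ {y}, σ y = y → σ.symm y = y := fun h => σ.symm_apply_eq.2 h.symm
  have hcomm := H.commutator_le_self (Subgroup.commutator_mem_commutator hf hF)
  rw [commutatorElement_prodPerm_base] at hcomm
  refine mem_baseValues.2 ⟨_, hcomm, fun y hy => ?_, ?_⟩
  · simp [hfix (hT y hy).1, (hT y hy).2]
  · simp [hfix hx, commutatorElement_def]

theorem commutator_baseValues_le :
    ⁅baseValues H T x, baseValues H T' x⁆ ≤ baseValues H (T ∪ T') x := by
  refine Subgroup.commutator_le.2 fun s hs t ht => ?_
  obtain ⟨f, hf, hfT, rfl⟩ := mem_baseValues.1 hs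
  obtain ⟨g, hg, hgT, rfl⟩ := mem_baseValues.1 ht
  have hcomm : ⁅f, g⁆ ∈ H.comap (baseHom M X) :=
    Subgroup.commutator_le_self _ (Subgroup.commutator_mem_commutator hf hg)
  refine mem_baseValues.2 ⟨⁅f, g⁆, hcomm, ?_, rfl⟩
  rintro y (hy | hy)
  · simp [commutatorElement_def, hfT y hy]
  · simp [commutatorElement_def, hgT y hy]

end Base

/-! ### Marking the cycles of a permutation -/

section CycleMark

variable {X : Type*}

/-- The indicator function of a system of representatives of the cycles of `α` not passing
through `x₀`. -/
noncomputable def cycleMark (α : Perm X) (x₀ x : X) : ℕ :=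
  open Classical in if x ≠ x₀ ∧ (Quotient.mk (Perm.SameCycle.setoid α) x).out = x then 1 else 0

variable {α : Perm X} {x₀ x : X}

@[simp]
theorem cycleMark_self : cycleMark α x₀ x₀ = 0 := by simp [cycleMark]

theorem exists_cycleMark_eq_one (hx₀ : α x₀ = x₀) (hx : x ≠ x₀) :
    ∃ z, α.SameCycle x z ∧ cycleMark α x₀ z = 1 ∧
      ∀ y, α.SameCycle x y → y ≠ z → cycleMark α x₀ y = 0 := by
  have hclass : ∀ {y}, α.SameCycle x y →
      Quotient.mk (Perm.SameCycle.setoid α) y = Quotient.mk _ x := fun hy => Quotient.sound hy.symm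
  have hz : α.SameCycle x (Quotient.mk (Perm.SameCycle.setoid α) x).out :=
    (Quotient.mk_out (s := Perm.SameCycle.setoid α) x).symm
  refine ⟨_, hz, if_pos ⟨fun hz₀ => hx ((hz₀ ▸ hz).eq_of_right hx₀), by rw [hclass hz]⟩,
    fun y hy hyz => if_neg fun hmark => hyz ?_⟩
  rw [← hmark.2, hclass hy]

theorem existsUnique_lt_period_inv_pow_apply_eq [Finite X] {z : X} (hz : α.SameCycle x z) :
    ∃! j, j < period α x ∧ (α⁻¹ ^ j) x = z := by
  obtain ⟨k, rfl⟩ := (Perm.sameCycle_inv.2 hz).exists_nat_pow_eq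
  have hpos : 0 < period α x := period_pos_of_orderOf_pos (orderOf_pos α) x
  rw [← period_inv] at hpos ⊢
  refine ⟨k % period α⁻¹ x, ⟨Nat.mod_lt k hpos, pow_mod_period_smul (m := α⁻¹) k⟩, fun j hj => ?_⟩
  refine Function.iterate_injOn_Iio_minimalPeriod hj.1 (Nat.mod_lt k hpos) ?_
  simp only [smul_iterate_apply, pow_mod_period_smul]
  exact hj.2

theorem sum_cycleMark_inv_pow [Finite X] (hx₀ : α x₀ = x₀) (hx : x ≠ x₀) :
    ∑ j ∈ Finset.range (period α x), cycleMark α x₀ ((α⁻¹ ^ j) x) = 1 := by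
  obtain ⟨z, hz, hmark, hother⟩ := exists_cycleMark_eq_one hx₀ hx
  obtain ⟨k, ⟨hk, hkz⟩, hunique⟩ := existsUnique_lt_period_inv_pow_apply_eq hz
  rw [Finset.sum_eq_single_of_mem k (Finset.mem_range.2 hk), hkz, hmark]
  intro j hj hjk
  refine hother _ (Perm.sameCycle_inv.1 ⟨j, by rw [zpow_natCast]⟩) fun hjz => ?_
  exact hjk (hunique j ⟨Finset.mem_range.1 hj, hjz⟩)

theorem sum_cycleMark_inv_pow_orderOf [Finite X] (hx₀ : α x₀ = x₀) (hx : x ≠ x₀) :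
    ∑ j ∈ Finset.range (orderOf α), cycleMark α x₀ ((α⁻¹ ^ j) x) = orderOf α / period α x := by
  have hperiodic : Function.Periodic (fun j => cycleMark α x₀ ((α⁻¹ ^ j) x)) (period α x) := by
    intro j
    have := pow_add_period_smul j α⁻¹ x
    rw [period_inv] at this
    exact congrArg _ this
  rw [← Nat.mul_div_cancel' (period_dvd_orderOf α x), sum_range_mul_of_periodic hperiodic,
    sum_cycleMark_inv_pow hx₀ hx, Nat.mul_div_cancel' (period_dvd_orderOf α x), smul_eq_mul,
    mul_one]

end CycleMark

/-! ### Marked lifts -/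

section MarkedLift

variable {M X : Type}

theorem prodPerm_pow_exponents_pow (a : Perm M) (c : X → ℕ) (α : Perm X) (k : ℕ) :
    prodPerm (fun i => a ^ c i) α ^ k =
      prodPerm (fun i => a ^ ∑ j ∈ Finset.range k, c ((α⁻¹ ^ j) i)) (α ^ k) := by
  induction k with
  | zero => simp [prodPerm_one]
  | succ k ih =>
    rw [pow_succ', ih, prodPerm_mul, ← pow_succ']
    congr 1
    funext i
    rw [Finset.sum_range_succ', ← pow_add, add_comm]
    simp [pow_succ]

/-- The lift of `α` to the product action with label `a` at one point of each cycle of `α` not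
passing through `x₀`, and label `1` elsewhere. -/
noncomputable def markedLift (a : Perm M) (α : Perm X) (x₀ : X) : Perm (X → M) :=
  prodPerm (fun i => a ^ cycleMark α x₀ i) α

variable {H : Subgroup (Perm (X → M))} {a : Perm M} {α : Perm X} {x₀ x : X}

theorem markedLift_mem_expWr {A : Subgroup (Perm M)} {B : Subgroup (Perm X)} (ha : a ∈ A)
    (hα : α ∈ B) : markedLift a α x₀ ∈ expWr A B :=
  ⟨_, α, fun _ => A.pow_mem ha _, hα, rfl⟩

variable [Finite X]

theorem markedLift_pow_period (hx₀ : α x₀ = x₀) (hx : x ≠ x₀) :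
    ∃ F : X → Perm M, markedLift a α x₀ ^ period α x = prodPerm F (α ^ period α x) ∧
      F x = a ∧ F x₀ = 1 := by
  refine ⟨_, prodPerm_pow_exponents_pow a _ α _, ?_, ?_⟩
  · rw [sum_cycleMark_inv_pow hx₀ hx, pow_one]
  · have hfix : ∀ j, (α⁻¹ ^ j) x₀ = x₀ := fun j =>
      Perm.pow_apply_eq_self_of_apply_eq_self (Perm.inv_eq_iff_eq.2 hx₀.symm) j
    simp only [hfix, cycleMark_self, Finset.sum_const_zero, pow_zero]

-- At most one edge of each cycle of `α` has a label other than `1`, and then `x` and `α x` are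
-- still connected by the remaining edges of the cycle.
theorem baseValues_empty_apply_eq_of_markedLift_mem (hx₀ : α x₀ = x₀)
    (hH : markedLift a α x₀ ∈ H) (x : X) : baseValues H ∅ (α x) = baseValues H ∅ x := by
  rcases eq_or_ne x x₀ with rfl | hx
  · rw [hx₀]
  obtain ⟨l, hl⟩ : ∃ l, period α x = l + 1 :=
    Nat.exists_eq_succ_of_ne_zero (period_pos_of_orderOf_pos (orderOf_pos α) x).ne'
  have hback : (α ^ l) (α x) = x := by
    have := pow_period_smul α x
    rwa [hl, pow_succ] at this
  have hback' : (α⁻¹ ^ l) x = α x := by rw [inv_pow, Perm.inv_eq_iff_eq, hback]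
  have hsum := sum_cycleMark_inv_pow hx₀ hx
  rw [hl, Finset.sum_range_succ, hback'] at hsum
  by_cases hmark : cycleMark α x₀ (α x) = 0
  · exact baseValues_empty_apply_eq hH (by simp [hmark])
  · have hpow := H.pow_mem hH l
    rw [markedLift, prodPerm_pow_exponents_pow] at hpow
    have hrest : ∑ j ∈ Finset.range l, cycleMark α x₀ ((α⁻¹ ^ j) x) = 0 := by omega
    have hlabel := baseValues_empty_apply_eq (x := α x) hpow (by rw [hback, hrest, pow_zero])
    rw [← hlabel, hback]

theorem pow_orderOf_div_period_mem_baseValues (hx₀ : α x₀ = x₀) (hH : markedLift a α x₀ ∈ H)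
    (hx : x ≠ x₀) : a ^ (orderOf α / period α x) ∈ baseValues H ∅ x := by
  have hpow := H.pow_mem hH (orderOf α)
  rw [markedLift, prodPerm_pow_exponents_pow, pow_orderOf_eq_one] at hpow
  exact mem_baseValues.2 ⟨_, hpow, by simp, by rw [sum_cycleMark_inv_pow_orderOf hx₀ hx]⟩

theorem commutatorElement_mem_baseValues_of_markedLift_mem (hx₀ : α x₀ = x₀)
    (hH : markedLift a α x₀ ∈ H) (hx : x ≠ x₀) {s : Perm M} (hs : s ∈ baseValues H ∅ x) :
    ⁅s, a⁆ ∈ baseValues H {x₀} x := by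
  obtain ⟨F, hpow, hFx, hFx₀⟩ := markedLift_pow_period (a := a) hx₀ hx
  have hF : prodPerm F (α ^ period α x) ∈ H := hpow ▸ H.pow_mem hH _
  have hfix := Perm.pow_apply_eq_self_of_apply_eq_self hx₀ (period α x)
  rw [← hFx]
  refine commutatorElement_mem_baseValues hF (pow_period_smul α x) ?_ hs
  rintro _ rfl
  exact ⟨hfix, hFx₀⟩

theorem mem_baseValues_empty_of_markedLift_mem [Nontrivial X] (hx₀ : α x₀ = x₀)
    (hH : markedLift a α x₀ ∈ H) (hconst : ∀ y, baseValues H ∅ y = baseValues H ∅ x) :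
    a ∈ baseValues H ∅ x :=
  mem_of_pow_orderOf_div_period_mem (isOfFinOrder_of_finite α) hx₀ fun y hy =>
    hconst y ▸ pow_orderOf_div_period_mem_baseValues hx₀ hH hy

end MarkedLift

/-! ### Generating an exponentiation -/

section Generation

variable {M X : Type} {A : Subgroup (Perm M)} {B : Subgroup (Perm X)} {H : Subgroup (Perm (X → M))}

theorem exists_prodPerm_mem_of_mem_closure {s : Set (Perm X)}
    (h : ∀ σ ∈ s, ∃ F : X → Perm M, (∀ i, F i ∈ A) ∧ prodPerm F σ ∈ H)
    {σ : Perm X} (hσ : σ ∈ Subgroup.closure s) :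
    ∃ F : X → Perm M, (∀ i, F i ∈ A) ∧ prodPerm F σ ∈ H := by
  induction hσ using Subgroup.closure_induction with
  | mem σ hσ => exact h σ hσ
  | one => exact ⟨fun _ => 1, fun _ => A.one_mem, prodPerm_one ▸ H.one_mem⟩
  | mul σ τ _ _ ihσ ihτ =>
    obtain ⟨F, hFA, hF⟩ := ihσ
    obtain ⟨G, hGA, hG⟩ := ihτ
    exact ⟨_, fun i => A.mul_mem (hFA i) (hGA _), prodPerm_mul F G σ τ ▸ H.mul_mem hF hG⟩
  | inv σ _ ih =>
    obtain ⟨F, hFA, hF⟩ := ih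
    exact ⟨_, fun i => A.inv_mem (hFA _), prodPerm_inv F σ ▸ H.inv_mem hF⟩

theorem expWr_le_of_base_le (hbase : ∀ f : X → Perm M, (∀ i, f i ∈ A) → prodPerm f 1 ∈ H)
    (hlift : ∀ σ ∈ B, ∃ F : X → Perm M, (∀ i, F i ∈ A) ∧ prodPerm F σ ∈ H) : expWr A B ≤ H := by
  rintro _ ⟨f, σ, hf, hσ, rfl⟩
  obtain ⟨F, hFA, hF⟩ := hlift σ hσ
  have hquot := hbase (fun i => f i * (F i)⁻¹) fun i => A.mul_mem (hf i) (A.inv_mem (hFA i))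
  simpa [prodPerm_mul] using H.mul_mem hquot hF

theorem prodPerm_one_mem_of_le_baseValues_compl [Finite X]
    (h : ∀ x, A ≤ baseValues H {x}ᶜ x) {f : X → Perm M} (hf : ∀ i, f i ∈ A) :
    prodPerm f 1 ∈ H := by
  classical
  refine Subgroup.pi_mem_of_mulSingle_mem (H := H.comap (baseHom M X)) f fun x => ?_
  obtain ⟨g, hg, hgx, hfx⟩ := mem_baseValues.1 (h x (hf x))
  have : Pi.mulSingle x (f x) = g := by
    rw [← hfx]
    funext y
    rcases eq_or_ne y x with rfl | hy
    · simp
    · rw [Pi.mulSingle_eq_of_ne hy, hgx y hy]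
  rwa [this]

theorem le_baseValues_of_notMem [Group.IsPerfect A] {x : X} (hempty : A ≤ baseValues H ∅ x)
    (hsingle : ∀ y, x ≠ y → A ≤ baseValues H {y} x) {T : Set X} (hT : T.Finite) (hx : x ∉ T) :
    A ≤ baseValues H T x := by
  induction T, hT using Set.Finite.induction_on with
  | empty => exact hempty
  | @insert y T _ _ ih =>
    rw [Set.mem_insert_iff, not_or] at hx
    calc A = ⁅A, A⁆ := A.commutator_eq_self.symm
      _ ≤ ⁅baseValues H {y} x, baseValues H T x⁆ :=
        Subgroup.commutator_mono (hsingle y hx.1) (ih hx.2)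
      _ ≤ baseValues H (insert y T) x := commutator_baseValues_le

variable [Finite X]

theorem commutatorElement_mem_baseValues_singleton {a s : Perm M} {α : Perm X} {x₀ x y : X}
    (hempty : ∀ x, A ≤ baseValues H ∅ x)
    (hlift : ∀ σ ∈ B, ∃ F : X → Perm M, (∀ i, F i ∈ A) ∧ prodPerm F σ ∈ H)
    (htrans : ∀ x y, ∃ σ ∈ B, σ x = y) (hx₀ : α x₀ = x₀) (hH : markedLift a α x₀ ∈ H)
    (hxy : x ≠ y) (hs : s ∈ A) : ⁅s, a⁆ ∈ baseValues H {y} x := by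
  obtain ⟨σ, hσ, rfl⟩ := htrans x₀ y
  obtain ⟨F, hFA, hF⟩ := hlift σ hσ
  obtain ⟨z, rfl⟩ := σ.surjective x
  have hz : z ≠ x₀ := fun h => hxy (congrArg σ h)
  have hmove := baseValues_le_baseValues_image (T := {x₀}) hF (hempty _ (hFA (σ z)))
  rw [Set.image_singleton] at hmove
  exact hmove (commutatorElement_mem_baseValues_of_markedLift_mem hx₀ hH hz (hempty z hs))

variable {a b : Perm M} {α β : Perm X} {x₀ y₀ : X}

theorem closure_le_baseValues_empty [Nontrivial X]
    (htrans : ∀ x y, ∃ σ ∈ Subgroup.closure {α, β}, σ x = y) (hx₀ : α x₀ = x₀) (hy₀ : β y₀ = y₀)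
    (hα : markedLift a α x₀ ∈ H) (hβ : markedLift b β y₀ ∈ H) (x : X) :
    Subgroup.closure {a, b} ≤ baseValues H ∅ x := by
  have hconst : ∀ y, baseValues H ∅ y = baseValues H ∅ x := by
    intro y
    obtain ⟨σ, hσ, rfl⟩ := htrans x y
    refine apply_eq_of_mem_closure ?_ hσ x
    rintro _ (rfl | rfl)
    · exact baseValues_empty_apply_eq_of_markedLift_mem hx₀ hα
    · exact baseValues_empty_apply_eq_of_markedLift_mem hy₀ hβ
  rw [Subgroup.closure_le, Set.pair_subset_iff]
  exact ⟨mem_baseValues_empty_of_markedLift_mem hx₀ hα hconst,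
    mem_baseValues_empty_of_markedLift_mem hy₀ hβ hconst⟩

theorem expWr_closure_le_of_markedLift_mem [Nontrivial X]
    [Group.IsPerfect (Subgroup.closure {a, b})]
    (htrans : ∀ x y, ∃ σ ∈ Subgroup.closure {α, β}, σ x = y) (hx₀ : α x₀ = x₀) (hy₀ : β y₀ = y₀)
    (hα : markedLift a α x₀ ∈ H) (hβ : markedLift b β y₀ ∈ H) :
    expWr (Subgroup.closure {a, b}) (Subgroup.closure {α, β}) ≤ H := by
  set A := Subgroup.closure {a, b} with hA
  have hlift : ∀ σ ∈ Subgroup.closure {α, β},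
      ∃ F : X → Perm M, (∀ i, F i ∈ A) ∧ prodPerm F σ ∈ H := by
    refine fun σ => exists_prodPerm_mem_of_mem_closure ?_
    rintro _ (rfl | rfl)
    · exact ⟨_, fun i => A.pow_mem (Subgroup.subset_closure (by simp)) _, hα⟩
    · exact ⟨_, fun i => A.pow_mem (Subgroup.subset_closure (by simp)) _, hβ⟩
  have hempty := closure_le_baseValues_empty htrans hx₀ hy₀ hα hβ
  have hsingle : ∀ x y, x ≠ y → A ≤ baseValues H {y} x := by
    intro x y hxy
    rw [← A.commutator_eq_self]
    refine commutator_closure_le_of_forall_mem ((hempty x).trans le_normalizer_baseValues) ?_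
    rintro _ (rfl | rfl) s hs
    · exact commutatorElement_mem_baseValues_singleton hempty hlift htrans hx₀ hα hxy hs
    · exact commutatorElement_mem_baseValues_singleton hempty hlift htrans hy₀ hβ hxy hs
  exact expWr_le_of_base_le (fun _ => prodPerm_one_mem_of_le_baseValues_compl fun x =>
    le_baseValues_of_notMem (hempty x) (hsingle x) (Set.toFinite _) (by simp)) hlift

theorem closure_markedLift_eq_expWr [Nontrivial X] [Group.IsPerfect (Subgroup.closure {a, b})]
    (htrans : ∀ x y, ∃ σ ∈ Subgroup.closure {α, β}, σ x = y) (hx₀ : α x₀ = x₀) (hy₀ : β y₀ = y₀) :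
    Subgroup.closure {markedLift a α x₀, markedLift b β y₀} =
      expWr (Subgroup.closure {a, b}) (Subgroup.closure {α, β}) := by
  apply le_antisymm
  · rw [Subgroup.closure_le, Set.pair_subset_iff]
    constructor <;>
      exact markedLift_mem_expWr (Subgroup.subset_closure (by simp))
        (Subgroup.subset_closure (by simp))
  · exact expWr_closure_le_of_markedLift_mem htrans hx₀ hy₀
      (Subgroup.subset_closure (by simp)) (Subgroup.subset_closure (by simp))

end Generation

section Subsingleton

variable {M X : Type} [Subsingleton X] [Nonempty X]

theorem expWr_eq_map_of_subsingleton (A : Subgroup (Perm M)) (B : Subgroup (Perm X)) :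
    expWr A B = A.map ((baseHom M X).comp (Pi.constMonoidHom X (Perm M))) := by
  ext π
  constructor
  · rintro ⟨f, σ, hf, -, rfl⟩
    obtain ⟨x⟩ := ‹Nonempty X›
    have hfx : Function.const X (f x) = f := funext fun y => congrArg f (Subsingleton.elim x y)
    rw [Subsingleton.elim σ 1]
    exact ⟨f x, hf x, congrArg (prodPerm · 1) hfx⟩
  · rintro ⟨s, hs, rfl⟩
    exact ⟨fun _ => s, 1, fun _ => hs, B.one_mem, rfl⟩

theorem closure_prodPerm_const_eq_expWr (a b : Perm M) (α β : Perm X) (B : Subgroup (Perm X)) :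
    Subgroup.closure {prodPerm (fun _ => a) α, prodPerm (fun _ => b) β} =
      expWr (Subgroup.closure {a, b}) B := by
  rw [expWr_eq_map_of_subsingleton, MonoidHom.map_closure, Set.image_pair,
    Subsingleton.elim α 1, Subsingleton.elim β 1]
  rfl

end Subsingleton

theorem exists_closure_pair_eq_expWr {M X : Type} [Finite X] {a b : Perm M} {α β : Perm X}
    [Group.IsPerfect (Subgroup.closure {a, b})]
    (htrans : ∀ x y, ∃ σ ∈ Subgroup.closure {α, β}, σ x = y)
    (hα : ∃ x, α x = x) (hβ : ∃ x, β x = x) :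
    ∃ c d : X → ℕ, Subgroup.closure {prodPerm (fun i => a ^ c i) α, prodPerm (fun i => b ^ d i) β} =
      expWr (Subgroup.closure {a, b}) (Subgroup.closure {α, β}) := by
  obtain ⟨x₀, hx₀⟩ := hα
  obtain ⟨y₀, hy₀⟩ := hβ
  rcases subsingleton_or_nontrivial X with _ | _
  · have : Nonempty X := ⟨x₀⟩
    exact ⟨1, 1, by simpa using closure_prodPerm_const_eq_expWr a b α β _⟩
  · exact ⟨_, _, closure_markedLift_eq_expWr htrans hx₀ hy₀⟩

/-! ### Iterated exponentiations -/

section Iterated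

variable {S : ℕ → PermGroup} {n : ℕ}

theorem finite_carrier_iterExpP (hfin : ∀ k ≤ n, Finite (S k).carrier) :
    Finite (iterExpP S n).carrier := by
  induction n with
  | zero => exact hfin 0 le_rfl
  | succ n ih =>
    have := ih fun k hk => hfin k (hk.trans n.le_succ)
    have := hfin (n + 1) le_rfl
    exact inferInstanceAs (Finite ((iterExpP S n).carrier → (S (n + 1)).carrier))

theorem expWr_transitive {M X : Type} {A : Subgroup (Perm M)} (B : Subgroup (Perm X))
    (htrans : ∀ x y, ∃ σ ∈ A, σ x = y) (u v : X → M) : ∃ σ ∈ expWr A B, σ u = v := by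
  choose f hfA hf using fun i => htrans (u i) (v i)
  exact ⟨prodPerm f 1, ⟨f, 1, hfA, B.one_mem, rfl⟩, funext hf⟩

theorem iterExpP_transitive (htrans : ∀ x y : (S n).carrier, ∃ σ ∈ (S n).grp, σ x = y)
    (x y : (iterExpP S n).carrier) : ∃ σ ∈ (iterExpP S n).grp, σ x = y := by
  cases n with
  | zero => exact htrans x y
  | succ n => exact expWr_transitive (iterExpP S n).grp htrans x y

theorem exists_apply_eq_self_prodPerm_pow {M X : Type} {a : Perm M} (ha : ∃ p, a p = p)
    (c : X → ℕ) (α : Perm X) : ∃ x, prodPerm (fun i => a ^ c i) α x = x := by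
  obtain ⟨p, hp⟩ := ha
  exact ⟨fun _ => p, funext fun i => Perm.pow_apply_eq_self_of_apply_eq_self hp (c i)⟩

theorem exists_closure_pair_eq_iterExpP_succ {a b : Perm (S (n + 1)).carrier}
    {α β : Perm (iterExpP S n).carrier} [Finite (iterExpP S n).carrier]
    [hperf : Group.IsPerfect (S (n + 1)).grp]
    (htrans : ∀ x y : (S n).carrier, ∃ σ ∈ (S n).grp, σ x = y)
    (hab : Subgroup.closure {a, b} = (S (n + 1)).grp)
    (hαβ : Subgroup.closure {α, β} = (iterExpP S n).grp)
    (hα : ∃ x, α x = x) (hβ : ∃ x, β x = x) :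
    ∃ c d : (iterExpP S n).carrier → ℕ,
      Subgroup.closure {prodPerm (fun i => a ^ c i) α, prodPerm (fun i => b ^ d i) β} =
        (iterExpP S (n + 1)).grp := by
  have htransαβ := iterExpP_transitive htrans
  rw [← hαβ] at htransαβ
  rw [← hab] at hperf
  obtain ⟨c, d, hcd⟩ := exists_closure_pair_eq_expWr (a := a) (b := b) htransαβ hα hβ
  rw [hab, hαβ] at hcd
  exact ⟨c, d, hcd⟩

theorem exists_fixing_pair_iterExpP (a b : ∀ k, Perm (S k).carrier)
    (hfin : ∀ k < n, Finite (S k).carrier)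
    (htrans : ∀ k < n, ∀ x y : (S k).carrier, ∃ σ ∈ (S k).grp, σ x = y)
    (hperf : ∀ k, 1 ≤ k → k ≤ n → Group.IsPerfect (S k).grp)
    (hab : ∀ k ≤ n, Subgroup.closure {a k, b k} = (S k).grp)
    (hfix : ∀ k ≤ n, (∃ x, a k x = x) ∧ ∃ x, b k x = x) :
    ∃ g₁ g₂ : Perm (iterExpP S n).carrier, Subgroup.closure {g₁, g₂} = (iterExpP S n).grp ∧
      (∃ x, g₁ x = x) ∧ ∃ x, g₂ x = x := by
  induction n with
  | zero => exact ⟨a 0, b 0, hab 0 le_rfl, hfix 0 le_rfl⟩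
  | succ n ih =>
    obtain ⟨α, β, hαβ, hα, hβ⟩ := ih (fun k hk => hfin k (by omega))
      (fun k hk => htrans k (by omega)) (fun k h1 hk => hperf k h1 (by omega))
      (fun k hk => hab k (by omega)) (fun k hk => hfix k (by omega))
    have := finite_carrier_iterExpP fun k hk => hfin k (Nat.lt_succ_of_le hk)
    have := hperf (n + 1) (by omega) le_rfl
    obtain ⟨c, d, hcd⟩ := exists_closure_pair_eq_iterExpP_succ (htrans n n.lt_succ_self)
      (hab (n + 1) le_rfl) hαβ hα hβ
    obtain ⟨ha, hb⟩ := hfix (n + 1) le_rfl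
    exact ⟨_, _, hcd, exists_apply_eq_self_prodPerm_pow ha c α,
      exists_apply_eq_self_prodPerm_pow hb d β⟩

theorem iter_twoGen_general (a b : ∀ k, Perm (S k).carrier)
    (hfin : ∀ k < n, Finite (S k).carrier)
    (htrans : ∀ k < n, ∀ x y : (S k).carrier, ∃ σ ∈ (S k).grp, σ x = y)
    (hperf : ∀ k, 1 ≤ k → k ≤ n → commutator (S k).grp = ⊤)
    (hab : ∀ k ≤ n, Subgroup.closure {a k, b k} = (S k).grp)
    (hfix : ∀ k < n, (∃ x, a k x = x) ∧ ∃ x, b k x = x) :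
    ∃ g₁ g₂ : Perm (iterExpP S n).carrier,
      Subgroup.closure {g₁, g₂} = (iterExpP S n).grp := by
  cases n with
  | zero => exact ⟨a 0, b 0, hab 0 le_rfl⟩
  | succ n =>
    obtain ⟨α, β, hαβ, hα, hβ⟩ := exists_fixing_pair_iterExpP (n := n) a b
      (fun k hk => hfin k (by omega)) (fun k hk => htrans k (by omega))
      (fun k h1 hk => ⟨hperf k h1 (by omega)⟩)
      (fun k hk => hab k (by omega)) (fun k hk => hfix k (by omega))
    have := finite_carrier_iterExpP fun k hk => hfin k (Nat.lt_succ_of_le hk)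
    have : Group.IsPerfect (S (n + 1)).grp := ⟨hperf (n + 1) (by omega) le_rfl⟩
    obtain ⟨c, d, hcd⟩ := exists_closure_pair_eq_iterExpP_succ (htrans n n.lt_succ_self)
      (hab (n + 1) le_rfl) hαβ hα hβ
    exact ⟨_, _, hcd⟩

end Iterated

/-- **Lemma (two generators, finite case).** -/
theorem iter_twoGen (n : ℕ) (m : ℕ → ℕ)
    (S : ∀ k, Subgroup (Perm (Fin (m k))))
    (a b : ∀ k, Perm (Fin (m k)))
    (htrans : ∀ k, k ≤ n → ∀ x y : Fin (m k), ∃ σ ∈ S k, σ x = y)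
    (hperf : ∀ k, k ≤ n → commutator (S k) = ⊤)
    (hab : ∀ k, k ≤ n → Subgroup.closure {a k, b k} = S k)
    (hfix : ∀ k, k ≤ n → (∃ x, a k x = x) ∧ (∃ x, b k x = x))
    (hcop : ∀ j, 1 ≤ j → j ≤ n →
      Nat.Coprime (orderOf (a 0)) (orderOf (b j)) ∧
      Nat.Coprime (orderOf (b 0)) (orderOf (a j))) :
    ∃ g₁ g₂ : Perm ((iterExpP (fun k => ⟨Fin (m k), S k⟩) n).carrier),
      Subgroup.closure {g₁, g₂} = (iterExpP (fun k => ⟨Fin (m k), S k⟩) n).grp := by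
  exact iter_twoGen_general a b (fun _ _ => Finite.of_fintype (Fin _))
    (fun k hk => htrans k hk.le) (fun k _ hk => hperf k hk) hab fun k hk => hfix k hk.le
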